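/- arXiv:1406.7489 — 2 statements merged into one kernel-verified Lean document; each statement's English description precedes it below -/
import Mathlib

section
/- For every integer g ≥ 2, the action of the integral symplectic group Sp(2g,ℤ) on ℝ^{2g} by matrix–vector multiplication is ergodic with respect to Lebesgue measure: every Lebesgue-measurable set A ⊆ ℝ^{2g} satisfying M·A = A for all M ∈ Sp(2g,ℤ) is either Lebesgue-null or has Lebesgue-null complement. -/
open Matrix MeasureTheory

/-!
The group `Sp(2g, ℤ)` contains the shears `(p, q) ↦ (p + S q, q)` and `(p, q) ↦ (p, q + S p)` with
`S` an integral symmetric matrix. For almost every `q` the ratios of the coordinates of `q` are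
transcendental; then no nonzero linear functional is integral on all the vectors `S q`, so these
vectors are dense by Kronecker's theorem. Since a dense group of translations acts ergodically, an
invariant set has null or conull slices in almost every `p` and almost every `q`, and by Fubini it
is itself null or conull.
-/

open Filter Set Topology
open scoped ENNReal Matrix.Module symmDiff

section Lineality

variable {E : Type*} [AddCommGroup E] [Module ℝ E]

/-- The lineality space of an additive subgroup: the largest real subspace it contains. -/
def linealitySpace (H : AddSubgroup E) : Submodule ℝ E where
  carrier := {u | ∀ s : ℝ, s • u ∈ H}
  zero_mem' s := by simp [H.zero_mem]
  add_mem' hu hv s := by simpa only [smul_add] using H.add_mem (hu s) (hv s)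
  smul_mem' c u hu s := by simpa only [smul_smul] using hu (s * c)

theorem mem_of_mem_linealitySpace {H : AddSubgroup E} {u : E} (hu : u ∈ linealitySpace H) :
    u ∈ H := by
  simpa using hu 1

end Lineality

section KroneckerDensity

variable {E : Type*} [NormedAddCommGroup E] [NormedSpace ℝ E]

theorem tendsto_floor_div_norm_smul {ι : Type*} {l : Filter ι} {x : ι → E} {u : E}
    (hx : Tendsto x l (𝓝 0)) (hu : Tendsto (fun i ↦ ‖x i‖⁻¹ • x i) l (𝓝 u)) (s : ℝ) :
    Tendsto (fun i ↦ ⌊s / ‖x i‖⌋ • x i) l (𝓝 (s • u)) := by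
  have hfract : Tendsto (fun i ↦ Int.fract (s / ‖x i‖) • x i) l (𝓝 0) := by
    refine squeeze_zero_norm (fun i ↦ ?_) (tendsto_zero_iff_norm_tendsto_zero.1 hx)
    rw [norm_smul, Real.norm_of_nonneg (Int.fract_nonneg _)]
    exact mul_le_of_le_one_left (norm_nonneg _) (Int.fract_lt_one _).le
  have hdiff := (hu.const_smul s).sub hfract
  rw [sub_zero] at hdiff
  refine hdiff.congr fun i ↦ ?_
  rw [smul_smul, ← sub_smul, ← div_eq_mul_inv, Int.self_sub_fract, Int.cast_smul_eq_zsmul]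

/- Directions of small nonzero elements of `H` accumulate at a unit vector `u`, and suitable
integer multiples of those elements approximate every point of `ℝ u`. -/
theorem discreteTopology_of_isClosed_of_linealitySpace_eq_bot [ProperSpace E] {H : AddSubgroup E}
    (hH : IsClosed (H : Set E)) (hbot : linealitySpace H = ⊥) : DiscreteTopology H := by
  rw [discreteTopology_iff_isOpen_singleton_zero, isOpen_singleton_iff_punctured_nhds]
  by_contra hacc
  have : (𝓝[≠] (0 : H)).NeBot := ⟨hacc⟩
  let l : Ultrafilter H := .of (𝓝[≠] 0)
  have hl : (l : Filter H) ≤ 𝓝[≠] 0 := Ultrafilter.of_le _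
  have hzero : Tendsto ((↑) : H → E) l (𝓝 0) :=
    (continuous_subtype_val.tendsto (0 : H)).mono_left (hl.trans nhdsWithin_le_nhds)
  have hsphere : ∀ᶠ h : H in l, ‖(h : E)‖⁻¹ • (h : E) ∈ Metric.sphere (0 : E) 1 := by
    filter_upwards [hl self_mem_nhdsWithin] with h hh
    have hh' : (h : E) ≠ 0 := by simpa using hh
    simp [norm_smul, hh']
  obtain ⟨u, hu, hlu⟩ := (isCompact_sphere (0 : E) 1).ultrafilter_le_nhds
    (l.map fun h : H ↦ ‖(h : E)‖⁻¹ • (h : E)) (le_principal_iff.2 hsphere)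
  have hmem : u ∈ linealitySpace H := fun s ↦
    hH.mem_of_tendsto (tendsto_floor_div_norm_smul hzero hlu s) <|
      .of_forall fun h ↦ H.zsmul_mem h.2 _
  rw [hbot, Submodule.mem_bot] at hmem
  simp [hmem] at hu

variable [FiniteDimensional ℝ E]

theorem exists_dual_ne_zero_forall_mem_int_of_discreteTopology [Nontrivial E] (H : AddSubgroup E)
    [DiscreteTopology H] : ∃ ξ : Module.Dual ℝ E, ξ ≠ 0 ∧ ∀ x ∈ H, ∃ n : ℤ, ξ x = n := by
  by_cases hspan : Submodule.span ℝ (H : Set E) = ⊤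
  · let L : Submodule ℤ E := H.toIntSubmodule
    have : DiscreteTopology L := ‹DiscreteTopology H›
    have : IsZLattice ℝ L := ⟨hspan⟩
    let b := Module.Free.chooseBasis ℤ L
    let B := b.ofZLatticeBasis ℝ L
    obtain ⟨i⟩ := B.index_nonempty
    refine ⟨B.coord i, fun h ↦ ?_, fun x hx ↦ ⟨b.repr ⟨x, hx⟩ i, ?_⟩⟩
    · simpa using LinearMap.congr_fun h (B i)
    · simpa using b.ofZLatticeBasis_repr_apply ℝ L ⟨x, hx⟩ i
  · obtain ⟨ξ, hξ, hker⟩ := Submodule.exists_le_ker_of_lt_top _ (lt_top_iff_ne_top.2 hspan)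
    exact ⟨ξ, hξ, fun x hx ↦ ⟨0, by simpa using hker (Submodule.subset_span hx)⟩⟩

theorem exists_dual_ne_zero_forall_mem_int_of_isClosed {H : AddSubgroup E}
    (hH : IsClosed (H : Set E)) (hne : H ≠ ⊤) :
    ∃ ξ : Module.Dual ℝ E, ξ ≠ 0 ∧ ∀ x ∈ H, ∃ n : ℤ, ξ x = n := by
  let V := linealitySpace H
  obtain ⟨W, hVW⟩ := V.exists_isCompl
  let K : AddSubgroup W := H.comap W.subtype.toAddMonoidHom
  have : DiscreteTopology K := by
    refine discreteTopology_of_isClosed_of_linealitySpace_eq_bot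
      (hH.preimage continuous_subtype_val) ((Submodule.eq_bot_iff _).2 fun w hw ↦ ?_)
    exact Subtype.ext (Submodule.disjoint_def.1 hVW.disjoint _ hw w.2)
  have : Nontrivial W := by
    rw [Submodule.nontrivial_iff_ne_bot]
    refine fun hW ↦ hne ((AddSubgroup.eq_top_iff' H).2 fun x ↦ ?_)
    have hV : V = ⊤ := by simpa [hW] using hVW.sup_eq_top
    exact mem_of_mem_linealitySpace (hV ▸ Submodule.mem_top : x ∈ V)
  obtain ⟨ξ, hξ, hint⟩ := exists_dual_ne_zero_forall_mem_int_of_discreteTopology K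
  let P := W.projectionOnto V hVW.symm
  have hPmem : ∀ x ∈ H, P x ∈ K := fun x hx ↦ by
    have hsub : x - P x ∈ V := by
      rw [← Submodule.ker_projectionOnto hVW.symm, LinearMap.mem_ker, map_sub,
        Submodule.projectionOnto_apply_left, sub_self]
    simpa using! H.sub_mem hx (mem_of_mem_linealitySpace hsub)
  refine ⟨ξ ∘ₗ P, fun h ↦ hξ (LinearMap.ext fun w ↦ ?_), fun x hx ↦ hint _ (hPmem x hx)⟩
  simpa [P] using LinearMap.congr_fun h w

/-- Kronecker's density theorem, in its dual form. -/
theorem dense_of_forall_dual_eq_zero {H : AddSubgroup E}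
    (hH : ∀ ξ : Module.Dual ℝ E, (∀ x ∈ H, ∃ n : ℤ, ξ x = n) → ξ = 0) : Dense (H : Set E) := by
  rw [dense_iff_closure_eq, ← H.topologicalClosure_coe, AddSubgroup.coe_eq_univ]
  by_contra hne
  obtain ⟨ξ, hξ, hint⟩ :=
    exists_dual_ne_zero_forall_mem_int_of_isClosed H.isClosed_topologicalClosure hne
  exact hξ (hH ξ fun x hx ↦ hint x (H.le_topologicalClosure hx))

end KroneckerDensity

section GenericVectors

theorem eq_zero_of_transcendental_of_quadratic_eq_zero {R A : Type*} [CommRing R] [Ring A]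
    [Algebra R A] {r : A} (hr : Transcendental R r) {a b c : R}
    (h : algebraMap R A a * r ^ 2 + algebraMap R A b * r + algebraMap R A c = 0) : a = 0 := by
  by_contra ha
  refine hr ⟨.C a * .X ^ 2 + .C b * .X + .C c, fun h0 ↦ ha ?_, by simpa using h⟩
  rw [← Polynomial.leadingCoeff_quadratic ha (b := b) (c := c), h0, Polynomial.leadingCoeff_zero]

theorem ae_dual_apply_ne_zero {E : Type*} [NormedAddCommGroup E] [NormedSpace ℝ E]
    [FiniteDimensional ℝ E] [MeasurableSpace E] [BorelSpace E] (μ : Measure E)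
    [μ.IsAddHaarMeasure] {ξ : Module.Dual ℝ E} (hξ : ξ ≠ 0) : ∀ᵐ x ∂μ, ξ x ≠ 0 :=
  measure_eq_zero_iff_ae_notMem.1 <|
    μ.addHaar_submodule ξ.ker (mt LinearMap.ker_eq_top.1 hξ)

variable {l : Type*} [Fintype l]

theorem ae_transcendental_div (R : Type*) [CommRing R] [IsDomain R] [Countable R] [Algebra R ℝ]
    [Module.IsTorsionFree R ℝ] :
    ∀ᵐ q : l → ℝ, ∀ i j, i ≠ j → Transcendental R (q j / q i) := by
  classical
  have hne : ∀ᵐ q : l → ℝ, ∀ i j, i ≠ j → ∀ c ∈ {c : ℝ | IsAlgebraic R c}, q j - c * q i ≠ 0 := by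
    simp only [ae_all_iff, ae_ball_iff (Algebraic.countable R ℝ)]
    intro i j hij c _
    let ξ : Module.Dual ℝ (l → ℝ) := .proj j - c • .proj i
    have hξ : ξ ≠ 0 := fun h ↦ by simpa [ξ, hij] using LinearMap.congr_fun h (Pi.single j 1)
    exact ae_dual_apply_ne_zero volume hξ
  filter_upwards [hne] with q hq i j hij halg
  have hi : q i ≠ 0 := by simpa using hq j i hij.symm 0 isAlgebraic_zero
  exact hq i j hij _ halg (by field_simp; simp)

variable [DecidableEq l] [Nontrivial l] {q : l → ℝ}

theorem dual_eq_zero_of_forall_isSymm_smul_mem_int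
    (hq : ∀ i j, i ≠ j → Transcendental ℤ (q j / q i)) {ξ : Module.Dual ℝ (l → ℝ)}
    (hξ : ∀ S : Matrix l l ℤ, S.IsSymm → ∃ n : ℤ, ξ (S • q) = n) : ξ = 0 := by
  refine LinearMap.pi_ext' fun i ↦ LinearMap.ext_ring ?_
  obtain ⟨j, hji⟩ := exists_ne i
  have hqi : q i ≠ 0 := fun h ↦ hq i j hji.symm (by simpa [h] using isAlgebraic_zero)
  have hsingle (a b : l) : ξ (Pi.single a (q b)) = q b * ξ (Pi.single a 1) := by
    rw [← smul_eq_mul, ← map_smul, ← Pi.single_smul', smul_eq_mul, mul_one]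
  obtain ⟨m, hm⟩ := hξ (.single i i 1) (by simp [Matrix.IsSymm])
  obtain ⟨n, hn⟩ := hξ (.single j j 1) (by simp [Matrix.IsSymm])
  obtain ⟨k, hk⟩ := hξ (.single i j 1 + .single j i 1) (by simp [Matrix.IsSymm, add_comm])
  simp only [add_smul, Matrix.Module.single_smul, one_smul, map_add, hsingle] at hm hn hk
  have hquad : (m : ℝ) * (q j / q i) ^ 2 + ((-k : ℤ) : ℝ) * (q j / q i) + n = 0 := by
    rw [← hm, ← hn, Int.cast_neg, ← hk]
    field_simp
    ring
  have hm0 : m = 0 := eq_zero_of_transcendental_of_quadratic_eq_zero (hq i j hji.symm) hquad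
  simpa [hm0, hqi] using hm

theorem denseRange_isSymm_smul (hq : ∀ i j, i ≠ j → Transcendental ℤ (q j / q i)) :
    DenseRange fun S : {S : Matrix l l ℤ // S.IsSymm} ↦ S.1 • q := by
  let H : AddSubgroup (l → ℝ) :=
    { carrier := range fun S : {S : Matrix l l ℤ // S.IsSymm} ↦ S.1 • q
      zero_mem' := ⟨⟨0, isSymm_zero⟩, zero_smul _ q⟩
      add_mem' := by
        rintro _ _ ⟨S, rfl⟩ ⟨T, rfl⟩
        exact ⟨⟨S + T, S.2.add T.2⟩, add_smul _ _ q⟩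
      neg_mem' := by
        rintro _ ⟨S, rfl⟩
        exact ⟨⟨-S, S.2.neg⟩, neg_smul _ q⟩ }
  exact dense_of_forall_dual_eq_zero (H := H) fun ξ hξ ↦
    dual_eq_zero_of_forall_isSymm_smul_mem_int hq fun S hS ↦ hξ _ ⟨⟨S, hS⟩, rfl⟩

end GenericVectors

section DenseTranslations

section ContinuousFamily

variable {X Y Z : Type*} [TopologicalSpace X] [R1Space X] [MeasurableSpace X] [BorelSpace X]
  [TopologicalSpace Y] [R1Space Y] [MeasurableSpace Y] [BorelSpace Y] [TopologicalSpace Z]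
  {μ : Measure X} {ν : Measure Y} [μ.InnerRegularCompactLTTop] [IsLocallyFiniteMeasure ν]
  {f : Z → C(X, Y)} {t : Set Y}

theorem isClosed_setOfPred_preimage_ae_le_of_measure_ne_top (hf : Continuous f)
    (hfm : ∀ z, MeasurePreserving (f z) μ ν) (htm : NullMeasurableSet t ν) (ht : ν t ≠ ∞)
    (s : Set X) : IsClosed {z | f z ⁻¹' t ≤ᵐ[μ] s} := by
  rw [← isOpen_compl_iff, isOpen_iff_mem_nhds]
  intro z hz
  have hpos : 0 < μ (f z ⁻¹' t \ s) := pos_iff_ne_zero.2 (mt ae_le_set.2 hz)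
  filter_upwards [(tendsto_measure_symmDiff_preimage_nhds_zero (hf.tendsto z)
    (.of_forall hfm) (hfm z) htm ht).eventually_lt_const hpos] with w hw hle
  refine hw.not_ge ?_
  calc
    μ (f z ⁻¹' t \ s) ≤ μ ((f w ⁻¹' t) ∆ (f z ⁻¹' t) ∪ f w ⁻¹' t \ s) := by
      refine measure_mono fun x hx ↦ ?_
      by_cases hxw : x ∈ f w ⁻¹' t
      · exact .inr ⟨hxw, hx.2⟩
      · exact .inl (.inr ⟨hx.1, hxw⟩)
    _ ≤ μ ((f w ⁻¹' t) ∆ (f z ⁻¹' t)) + μ (f w ⁻¹' t \ s) := measure_union_le _ _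
    _ = μ ((f w ⁻¹' t) ∆ (f z ⁻¹' t)) := by rw [ae_le_set.1 hle, add_zero]

theorem isClosed_setOfPred_preimage_ae_le [SigmaFinite ν] (hf : Continuous f)
    (hfm : ∀ z, MeasurePreserving (f z) μ ν) (ht : NullMeasurableSet t ν) (s : Set X) :
    IsClosed {z | f z ⁻¹' t ≤ᵐ[μ] s} := by
  have hfin (n : ℕ) : ν (t ∩ spanningSets ν n) ≠ ∞ :=
    measure_ne_top_of_subset inter_subset_right (measure_spanningSets_lt_top ν n).ne
  have hinter : {z | f z ⁻¹' t ≤ᵐ[μ] s} =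
      ⋂ n, {z | f z ⁻¹' (t ∩ spanningSets ν n) ≤ᵐ[μ] s} := by
    ext z
    simp only [mem_ofPred_eq, mem_iInter, ae_le_set, ← measure_iUnion_null_iff, ← iUnion_sdiff,
      ← preimage_iUnion, ← inter_iUnion, iUnion_spanningSets, inter_univ]
  rw [hinter]
  exact isClosed_iInter fun n ↦ isClosed_setOfPred_preimage_ae_le_of_measure_ne_top hf hfm
    (ht.inter (measurableSet_spanningSets ν n).nullMeasurableSet) (hfin n) s

end ContinuousFamily

theorem aeconst_of_dense_setOfPred_preimage_vadd_ae_of_sigmaFinite {M X : Type*}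
    [TopologicalSpace M] [TopologicalSpace X] [R1Space X] [MeasurableSpace X] [BorelSpace X]
    [VAdd M X] [ContinuousVAdd M X] {μ : Measure X} [SigmaFinite μ] [IsLocallyFiniteMeasure μ]
    [μ.InnerRegularCompactLTTop] [ErgodicVAdd M X μ] {s : Set X} (hs : NullMeasurableSet s μ)
    (hd : Dense {g : M | (g +ᵥ ·) ⁻¹' s =ᵐ[μ] s}) : EventuallyConst s (ae μ) := by
  refine aeconst_of_forall_preimage_vadd_ae_eq M hs fun g ↦ ?_
  let f : C(M × X, X) := ⟨(· +ᵥ ·).uncurry, continuous_vadd⟩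
  have hle {t : Set X} (ht : NullMeasurableSet t μ)
      (hdt : Dense {g : M | (g +ᵥ ·) ⁻¹' t =ᵐ[μ] t}) : (g +ᵥ ·) ⁻¹' t ≤ᵐ[μ] t := by
    have hclosed : IsClosed {g : M | (g +ᵥ ·) ⁻¹' t ≤ᵐ[μ] t} :=
      isClosed_setOfPred_preimage_ae_le f.curry.continuous (measurePreserving_vadd · μ) ht t
    exact hclosed.closure_subset_iff.2 (fun _ h ↦ (mem_ofPred.1 h).le) (hdt g)
  have hcompl := hle hs.compl (hd.mono fun _ h ↦ (mem_ofPred.1 h).compl)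
  refine (hle hs hd).antisymm ?_
  filter_upwards [hcompl] with x hx hxs
  exact not_not.1 fun hg ↦ hx hg hxs

end DenseTranslations

section Fubini

variable {X Y : Type*} [MeasurableSpace X] [MeasurableSpace Y] {μ : Measure X} {ν : Measure Y}
  [SFinite ν] {s : Set (X × Y)}

theorem exists_ae_eq_preimage_fst (hs : MeasurableSet s)
    (h : ∀ᵐ x ∂μ, EventuallyConst (Prod.mk x ⁻¹' s) (ae ν)) :
    ∃ t : Set X, s =ᵐ[μ.prod ν] Prod.fst ⁻¹' t := by
  let t : Set X := {x | ν (Prod.mk x ⁻¹' sᶜ) = 0}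
  have ht : MeasurableSet t :=
    measurable_measure_prodMk_left hs.compl (measurableSet_singleton 0)
  have hmeas : MeasurableSet {z : X × Y | z ∈ s ↔ z.1 ∈ t} :=
    (hs.mem.iff (measurable_fst ht).mem).setOf
  refine ⟨t, eventuallyEq_set.2 ((Measure.ae_prod_iff_ae_ae hmeas).2 ?_)⟩
  filter_upwards [h] with x hx
  by_cases hxt : x ∈ t
  · have hall : ∀ᵐ y ∂ν, (x, y) ∈ s := hxt
    filter_upwards [hall] with y hy using iff_of_true hy hxt
  · have hnone : ∀ᵐ y ∂ν, (x, y) ∉ s := (eventuallyConst_set.1 hx).resolve_left hxt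
    filter_upwards [hnone] with y hy using iff_of_false hy hxt

theorem eventuallyConst_ae_prod [SFinite μ] (hs : MeasurableSet s)
    (hleft : ∀ᵐ x ∂μ, EventuallyConst (Prod.mk x ⁻¹' s) (ae ν))
    (hright : ∀ᵐ y ∂ν, EventuallyConst ((·, y) ⁻¹' s) (ae μ)) :
    EventuallyConst s (ae (μ.prod ν)) := by
  rcases eq_zero_or_neZero ν with rfl | _
  · rw [Measure.prod_zero, ae_zero]
    exact .bot
  obtain ⟨t, hst⟩ := exists_ae_eq_preimage_fst hs hleft
  have hslice : ∀ᵐ y ∂ν, (·, y) ⁻¹' s =ᵐ[μ] t := Measure.ae_ae_of_ae_prod <|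
    Measure.measurePreserving_swap.quasiMeasurePreserving.ae_eq hst
  obtain ⟨y, hy, hyt⟩ := (hright.and hslice).exists
  have htconst : EventuallyConst t (ae μ) := hy.congr hyt
  exact (htconst.comp_tendsto Measure.quasiMeasurePreserving_fst.tendsto_ae).congr hst.symm

theorem ae_eventuallyConst_of_forall_shear {ι E : Type*} [Countable ι] [AddGroup E]
    [TopologicalSpace E] [IsTopologicalAddGroup E] [MeasurableSpace E] [BorelSpace E]
    [MeasurableAdd₂ E] {ν : Measure E} [SigmaFinite ν] [IsLocallyFiniteMeasure ν]
    [ν.InnerRegularCompactLTTop] [ν.IsAddLeftInvariant] {s : Set (X × E)} (hs : MeasurableSet s)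
    {f : ι → X → E} (hf : ∀ᵐ x ∂μ, DenseRange (f · x))
    (hfs : ∀ i, (fun z : X × E ↦ (z.1, f i z.1 + z.2)) ⁻¹' s =ᵐ[μ.prod ν] s) :
    ∀ᵐ x ∂μ, EventuallyConst (Prod.mk x ⁻¹' s) (ae ν) := by
  have hslice : ∀ᵐ x ∂μ, ∀ i, (f i x +ᵥ ·) ⁻¹' (Prod.mk x ⁻¹' s) =ᵐ[ν] Prod.mk x ⁻¹' s :=
    ae_all_iff.2 fun i ↦ Measure.ae_ae_of_ae_prod (hfs i)
  filter_upwards [hf, hslice] with x hx hxs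
  exact aeconst_of_dense_setOfPred_preimage_vadd_ae_of_sigmaFinite
    (measurable_prodMk_left hs).nullMeasurableSet (hx.mono (range_subset_iff.2 hxs))

end Fubini

section SymplecticAction

variable {l R : Type*} [Fintype l] [DecidableEq l]

section Shears

variable [CommRing R]

/-- The shear `(p, q) ↦ (p + S q, q)` with symmetric `S`, as a symplectic matrix. -/
def upperShear (S : {S : Matrix l l R // S.IsSymm}) : symplecticGroup l R :=
  ⟨fromBlocks 1 S 0 1, by simp [SymplecticGroup.fromBlocks_mem_iff, S.2.eq]⟩

/-- The shear `(p, q) ↦ (p, q + S p)` with symmetric `S`, as a symplectic matrix. -/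
def lowerShear (S : {S : Matrix l l R // S.IsSymm}) : symplecticGroup l R :=
  ⟨fromBlocks 1 0 S 1, by simp [SymplecticGroup.fromBlocks_mem_iff, S.2.eq]⟩

variable {V : Type*} [AddCommGroup V] [Module R V]

theorem upperShear_smul_elim (S : {S : Matrix l l R // S.IsSymm}) (p q : l → V) :
    upperShear S • Sum.elim p q = Sum.elim (S.1 • q + p) q := by
  ext (i | i) <;> simp [upperShear, Submonoid.smul_def, Matrix.one_apply, add_comm]

theorem lowerShear_smul_elim (S : {S : Matrix l l R // S.IsSymm}) (p q : l → V) :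
    lowerShear S • Sum.elim p q = Sum.elim p (S.1 • p + q) := by
  ext (i | i) <;> simp [lowerShear, Submonoid.smul_def, Matrix.one_apply]

end Shears

theorem measurePreserving_mulVec_of_abs_det_eq_one {M : Matrix l l ℝ} (hM : |M.det| = 1) :
    MeasurePreserving (M *ᵥ ·) := by
  refine ⟨M.mulVecLin.continuous_of_finiteDimensional.measurable, ?_⟩
  have hdet : M.det ≠ 0 := fun h ↦ by simp [h] at hM
  simpa [hM] using! Real.map_matrix_volume_pi_eq_smul_volume_pi hdet

theorem symplecticGroup_int_smul_eq_mulVec (M : symplecticGroup l ℤ) (x : l ⊕ l → ℝ) :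
    M • x = M.1.map (Int.castRingHom ℝ) *ᵥ x := by
  ext i
  simp [Submonoid.smul_def, mulVec, dotProduct]

theorem measurePreserving_symplecticGroup_int_smul (M : symplecticGroup l ℤ) :
    MeasurePreserving (fun x : l ⊕ l → ℝ ↦ M • x) := by
  simp only [symplecticGroup_int_smul_eq_mulVec]
  exact measurePreserving_mulVec_of_abs_det_eq_one <| by
    rw [SymplecticGroup.det_eq_one (SymplecticGroup.map_mem M.2 _), abs_one]

theorem measurePreserving_sumElim {ι ι' α : Type*} [Fintype ι] [Fintype ι'] [MeasureSpace α]
    [SigmaFinite (volume : Measure α)] :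
    MeasurePreserving (fun z : (ι → α) × (ι' → α) ↦ Sum.elim z.1 z.2) (volume.prod volume) := by
  have helim : (fun z : (ι → α) × (ι' → α) ↦ Sum.elim z.1 z.2) =
      (MeasurableEquiv.sumPiEquivProdPi fun _ : ι ⊕ ι' ↦ α).symm := by
    funext z i
    cases i <;> rfl
  rw [helim]
  exact (volume_measurePreserving_sumPiEquivProdPi _).symm

theorem sp2gZ_action_on_R2g_ergodic_general (l : Type*) [Fintype l] [DecidableEq l]
    [Nontrivial l] : ErgodicSMul (symplecticGroup l ℤ) (l ⊕ l → ℝ) volume where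
  measure_preimage_smul M _ hs :=
    (measurePreserving_symplecticGroup_int_smul M).measure_preimage hs.nullMeasurableSet
  aeconst_of_forall_preimage_smul_ae_eq {s} hs hinv := by
    have : Countable (Matrix l l ℤ) := inferInstanceAs (Countable (l → l → ℤ))
    have hdense : ∀ᵐ q : l → ℝ, DenseRange fun S : {S : Matrix l l ℤ // S.IsSymm} ↦ S.1 • q :=
      (ae_transcendental_div ℤ).mono fun _ ↦ denseRange_isSymm_smul
    have hpair := measurePreserving_sumElim (ι := l) (ι' := l) (α := ℝ)
    have hswap : MeasurePreserving (fun z : (l → ℝ) × (l → ℝ) ↦ Sum.elim z.2 z.1)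
        (volume.prod volume) := hpair.comp Measure.measurePreserving_swap
    rw [← hpair.aeconst_preimage hs.nullMeasurableSet]
    refine eventuallyConst_ae_prod (hpair.measurable hs) ?_ ?_
    · refine ae_eventuallyConst_of_forall_shear (hpair.measurable hs) hdense fun S ↦ ?_
      simpa only [preimage_preimage, lowerShear_smul_elim] using
        hpair.quasiMeasurePreserving.preimage_ae_eq (hinv (lowerShear S))
    · change ∀ᵐ q, EventuallyConst (Prod.mk q ⁻¹' ((fun z ↦ Sum.elim z.2 z.1) ⁻¹' s)) (ae volume)
      refine ae_eventuallyConst_of_forall_shear (hswap.measurable hs) hdense fun S ↦ ?_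
      simpa only [preimage_preimage, upperShear_smul_elim] using
        hswap.quasiMeasurePreserving.preimage_ae_eq (hinv (upperShear S))

theorem preimage_symplecticGroup_int_smul_eq {s : Set (l ⊕ l → ℝ)}
    (hs : ∀ M : Matrix (l ⊕ l) (l ⊕ l) ℝ, (∀ i j, ∃ k : ℤ, M i j = k) →
      Mᵀ * J l ℝ * M = J l ℝ → (M *ᵥ ·) '' s = s) (M : symplecticGroup l ℤ) :
    (M • ·) ⁻¹' s = s := by
  have himage : (M • ·) '' s = s := by
    simp only [symplecticGroup_int_smul_eq_mulVec]
    exact hs _ (fun i j ↦ ⟨M.1 i j, rfl⟩)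
      (SymplecticGroup.mem_iff'.1 (SymplecticGroup.map_mem M.2 _))
  simpa only [himage] using preimage_image_eq s (MulAction.injective M)

end SymplecticAction

/-- For `g ≥ 2`, the action of `Sp(2g, ℤ)` (integral matrices `M` with `Mᵀ J M = J`,
acting on `ℝ^{2g}` by matrix-vector multiplication) is ergodic for the Lebesgue measure:
any invariant measurable set is null or conull. -/
theorem sp2gZ_action_on_R2g_ergodic (g : ℕ) (hg : 2 ≤ g)
    (A : Set ((Fin g ⊕ Fin g) → ℝ)) (hA : MeasurableSet A)
    (hinv : ∀ M : Matrix (Fin g ⊕ Fin g) (Fin g ⊕ Fin g) ℝ,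
      (∀ i j, ∃ k : ℤ, M i j = (k : ℝ)) →
      Mᵀ * Matrix.J (Fin g) ℝ * M = Matrix.J (Fin g) ℝ →
      (fun x => M.mulVec x) '' A = A) :
    volume A = 0 ∨ volume Aᶜ = 0 := by
  have : Nontrivial (Fin g) := Fin.nontrivial_iff_two_le.2 hg
  have := sp2gZ_action_on_R2g_ergodic_general (Fin g)
  simpa only [eventuallyConst_set', ae_eq_empty, ae_eq_univ] using
    aeconst_of_forall_preimage_smul_ae_eq (symplecticGroup (Fin g) ℤ) hA.nullMeasurableSet
      fun M ↦ .of_eq (preimage_symplecticGroup_int_smul_eq hinv M)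
end

section
/- Let g ≥ 2 and let (x,y) ∈ ℝ^{2g} × ℝ^{2g} be a pair of vectors with ω(x,y) ≠ 0. Then the stabilizer {M ∈ Sp(2g,ℝ) : Mx = x and My = y} is a closed subgroup of Sp(2g,ℝ) that is not compact. -/
open Matrix

/-!
The span of `x` and `y` has dimension at most `2 < 2g`, so it is a proper subspace of `ℝ^{2g}` and
some `v ≠ 0` is `ω`-orthogonal to both. The symplectic transvections `z ↦ z + t ω(v, z) v` then fix
`x` and `y`, and they form an affine line in the space of matrices, along which some matrix entry
takes every value.
-/

section Line

variable {m n K : Type*} [DivisionRing K] [TopologicalSpace K] [NoncompactSpace K]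

theorem not_isCompact_of_forall_add_smul_mem {s : Set (Matrix m n K)} {A B : Matrix m n K}
    (hB : B ≠ 0) (hs : ∀ t : K, A + t • B ∈ s) : ¬ IsCompact s := by
  obtain ⟨i, j, hij⟩ : ∃ i j, B i j ≠ 0 := by
    simpa only [Ne, ← Matrix.ext_iff, not_forall, Matrix.zero_apply] using hB
  intro hcompact
  have himage : (fun M : Matrix m n K => M i j) '' s = Set.univ := by
    refine Set.eq_univ_of_forall fun r => ⟨_, hs ((r - A i j) / B i j), ?_⟩
    simp [hij]
  exact noncompact_univ K (himage ▸ hcompact.image (continuous_apply_apply i j))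

end Line

section Transvection

variable {l R : Type*} [Fintype l] [DecidableEq l] [CommRing R]

theorem dotProduct_J_mulVec_self (v : l ⊕ l → R) : v ⬝ᵥ J l R *ᵥ v = 0 := by
  simp [J, fromBlocks_mulVec, dotProduct, neg_mulVec, mul_comm]

theorem J_mulVec_eq_neg_vecMul (v : l ⊕ l → R) : J l R *ᵥ v = -(v ᵥ* J l R) := by
  rw [← mulVec_transpose, J_transpose, neg_mulVec, neg_neg]

theorem isUnit_J : IsUnit (J l R) :=
  (isUnit_iff_isUnit_det _).2 (isUnit_det_J l R)

/-- The matrix of the symplectic transvection `x ↦ x + t ω(v, x) v`, where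
`ω(v, x) = v ⬝ᵥ J l R *ᵥ x`; it serves as an explicit element of the symplectic group fixing
every vector `ω`-orthogonal to `v`. -/
def symplecticTransvection (v : l ⊕ l → R) (t : R) : Matrix (l ⊕ l) (l ⊕ l) R :=
  1 + t • vecMulVec v (v ᵥ* J l R)

theorem symplecticTransvection_mulVec (v : l ⊕ l → R) (t : R) (x : l ⊕ l → R) :
    symplecticTransvection v t *ᵥ x = x + (t * (v ⬝ᵥ J l R *ᵥ x)) • v := by
  simp [symplecticTransvection, add_mulVec, smul_mulVec, vecMulVec_mulVec, dotProduct_mulVec,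
    smul_smul]

theorem symplecticTransvection_mem_symplecticGroup (v : l ⊕ l → R) (t : R) :
    symplecticTransvection v t ∈ symplecticGroup l R := by
  rw [SymplecticGroup.mem_iff', symplecticTransvection]
  set w := v ᵥ* J l R with hw
  set A := vecMulVec v w with hA
  have hwv : w ⬝ᵥ v = 0 := by rw [hw, ← dotProduct_mulVec, dotProduct_J_mulVec_self]
  have hleft : Aᵀ * J l R = vecMulVec w w := by rw [hA, transpose_vecMulVec, vecMulVec_mul]
  have hright : J l R * A = -vecMulVec w w := by
    rw [hA, mul_vecMulVec, J_mulVec_eq_neg_vecMul, neg_vecMulVec]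
  have hquad : Aᵀ * J l R * A = 0 := by
    rw [hleft, hA, vecMulVec_mul_vecMulVec, hwv, zero_smul, vecMulVec_zero]
  calc (1 + t • A)ᵀ * J l R * (1 + t • A)
      = J l R + t • (Aᵀ * J l R + J l R * A) + (t * t) • (Aᵀ * J l R * A) := by
        simp only [transpose_add, transpose_one, transpose_smul, add_mul, mul_add, one_mul,
          mul_one, Matrix.smul_mul, Matrix.mul_smul, smul_add, smul_smul]
        abel
    _ = J l R := by rw [hquad, hleft, hright, add_neg_cancel, smul_zero, smul_zero, add_zero,
        add_zero]

end Transvection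

section Fixator

variable {l R : Type*} [Fintype l] [DecidableEq l] [CommRing R]

/-- The pointwise stabilizer of `S` in the symplectic group. It is the image of Mathlib's
`fixingSubgroup` in the matrices, so that closedness and compactness refer to the topology of
the matrix space; matrices being only a monoid, it is bundled as a submonoid. -/
def symplecticFixator (S : Set (l ⊕ l → R)) : Submonoid (Matrix (l ⊕ l) (l ⊕ l) R) :=
  (fixingSubgroup (symplecticGroup l R) S).toSubmonoid.map (symplecticGroup l R).subtype

variable {S : Set (l ⊕ l → R)} {M : Matrix (l ⊕ l) (l ⊕ l) R}

theorem mem_symplecticFixator_iff :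
    M ∈ symplecticFixator S ↔ Mᵀ * J l R * M = J l R ∧ ∀ x ∈ S, M *ᵥ x = x := by
  simp [symplecticFixator, mem_fixingSubgroup_iff, Submonoid.smul_def, SymplecticGroup.mem_iff',
    and_comm]

theorem coe_symplecticFixator_pair (x y : l ⊕ l → R) :
    (symplecticFixator {x, y} : Set (Matrix (l ⊕ l) (l ⊕ l) R)) =
      {M | Mᵀ * J l R * M = J l R ∧ M *ᵥ x = x ∧ M *ᵥ y = y} := by
  ext M
  simp [mem_symplecticFixator_iff]

theorem exists_inverse_mem_symplecticFixator (hM : M ∈ symplecticFixator S) :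
    ∃ N ∈ symplecticFixator S, M * N = 1 ∧ N * M = 1 := by
  obtain ⟨A, hA, rfl⟩ := hM
  refine ⟨_, Submonoid.mem_map_of_mem _ (Subgroup.inv_mem _ hA), ?_, ?_⟩
  · rw [← map_mul, mul_inv_cancel, map_one]
  · rw [← map_mul, inv_mul_cancel, map_one]

theorem isClosed_symplecticFixator [TopologicalSpace R] [IsTopologicalSemiring R] [T2Space R]
    (S : Set (l ⊕ l → R)) :
    IsClosed (symplecticFixator S : Set (Matrix (l ⊕ l) (l ⊕ l) R)) := by
  have hinter : (symplecticFixator S : Set (Matrix (l ⊕ l) (l ⊕ l) R)) =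
      {M | Mᵀ * J l R * M = J l R} ∩ ⋂ x ∈ S, {M | M *ᵥ x = x} := by
    ext M
    simp [mem_symplecticFixator_iff]
  rw [hinter]
  exact (isClosed_eq (by fun_prop) continuous_const).inter <|
    isClosed_biInter fun x _ => isClosed_eq (by fun_prop) continuous_const

theorem symplecticTransvection_mem_symplecticFixator {v : l ⊕ l → R}
    (hv : ∀ x ∈ S, v ⬝ᵥ J l R *ᵥ x = 0) (t : R) :
    symplecticTransvection v t ∈ symplecticFixator S := by
  rw [mem_symplecticFixator_iff, ← SymplecticGroup.mem_iff']
  refine ⟨symplecticTransvection_mem_symplecticGroup v t, fun x hx => ?_⟩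
  rw [symplecticTransvection_mulVec, hv x hx, mul_zero, zero_smul, add_zero]

end Fixator

theorem span_pair_ne_top_of_two_le_card {l R : Type*} [Fintype l] [Semiring R]
    [StrongRankCondition R] (hl : 2 ≤ Fintype.card l) (x y : l ⊕ l → R) :
    Submodule.span R {x, y} ≠ ⊤ := by
  classical
  have hcard : ({x, y} : Set (l ⊕ l → R)).toFinset.card ≤ 2 := by
    simpa using Finset.card_le_two (a := x) (b := y)
  refine (span_lt_top_of_card_lt_finrank (hcard.trans_lt ?_)).ne
  rw [Module.finrank_fintype_fun_eq_card, Fintype.card_sum]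
  omega

section ProperSpan

variable {l K : Type*} [Fintype l] [DecidableEq l] [Field K] {S : Set (l ⊕ l → K)}

theorem exists_ne_zero_forall_dotProduct_J_mulVec_eq_zero (hS : Submodule.span K S ≠ ⊤) :
    ∃ v : l ⊕ l → K, v ≠ 0 ∧ ∀ x ∈ S, v ⬝ᵥ J l K *ᵥ x = 0 := by
  obtain ⟨f, hf, hker⟩ := Submodule.exists_le_ker_of_lt_top _ hS.lt_top
  obtain ⟨u, rfl⟩ := (dotProductEquiv K (l ⊕ l)).surjective f
  obtain ⟨v, rfl⟩ := vecMul_surjective_iff_isUnit.2 (isUnit_J (l := l) (R := K)) u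
  refine ⟨v, ?_, fun x hx => ?_⟩
  · rintro rfl
    simp at hf
  · rw [dotProduct_mulVec]
    exact hker (Submodule.subset_span hx)

theorem not_isCompact_symplecticFixator [TopologicalSpace K] [NoncompactSpace K]
    (hS : Submodule.span K S ≠ ⊤) :
    ¬ IsCompact (symplecticFixator S : Set (Matrix (l ⊕ l) (l ⊕ l) K)) := by
  obtain ⟨v, hv, hvS⟩ := exists_ne_zero_forall_dotProduct_J_mulVec_eq_zero hS
  have hvJ : v ᵥ* J l K ≠ 0 := fun h =>
    hv (vecMul_injective_iff_isUnit.2 isUnit_J (h.trans (zero_vecMul _).symm))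
  exact not_isCompact_of_forall_add_smul_mem (vecMulVec_ne_zero hv hvJ)
    (symplecticTransvection_mem_symplecticFixator hvS)

theorem stabilizer_of_pair_closed_noncompact_general [TopologicalSpace K] [IsTopologicalSemiring K]
    [T2Space K] [NoncompactSpace K] (hS : Submodule.span K S ≠ ⊤) :
    (∀ M ∈ symplecticFixator S, ∃ N ∈ symplecticFixator S, M * N = 1 ∧ N * M = 1) ∧
      IsClosed (symplecticFixator S : Set (Matrix (l ⊕ l) (l ⊕ l) K)) ∧
      ¬ IsCompact (symplecticFixator S : Set (Matrix (l ⊕ l) (l ⊕ l) K)) :=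
  ⟨fun _ => exists_inverse_mem_symplecticFixator, isClosed_symplecticFixator S,
    not_isCompact_symplecticFixator hS⟩

end ProperSpan

/-- For `g ≥ 2` and a pair of vectors `(x, y)` in `ℝ^{2g}` with `ω(x, y) ≠ 0`, the
stabilizer `{M ∈ Sp(2g, ℝ) : M x = x, M y = y}` is a closed subgroup of `Sp(2g, ℝ)`
(closed in the topology of real `2g × 2g` matrices) which is not compact. -/
theorem stabilizer_of_pair_closed_noncompact (g : ℕ) (hg : 2 ≤ g)
    (x y : (Fin g ⊕ Fin g) → ℝ)
    (hxy : x ⬝ᵥ (Matrix.J (Fin g) ℝ).mulVec y ≠ 0) :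
    (1 : Matrix (Fin g ⊕ Fin g) (Fin g ⊕ Fin g) ℝ) ∈
        {M : Matrix (Fin g ⊕ Fin g) (Fin g ⊕ Fin g) ℝ |
          Mᵀ * Matrix.J (Fin g) ℝ * M = Matrix.J (Fin g) ℝ ∧ M.mulVec x = x ∧ M.mulVec y = y} ∧
    (∀ M ∈ {M : Matrix (Fin g ⊕ Fin g) (Fin g ⊕ Fin g) ℝ |
          Mᵀ * Matrix.J (Fin g) ℝ * M = Matrix.J (Fin g) ℝ ∧ M.mulVec x = x ∧ M.mulVec y = y},
      ∀ N ∈ {M : Matrix (Fin g ⊕ Fin g) (Fin g ⊕ Fin g) ℝ |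
          Mᵀ * Matrix.J (Fin g) ℝ * M = Matrix.J (Fin g) ℝ ∧ M.mulVec x = x ∧ M.mulVec y = y},
      M * N ∈ {M : Matrix (Fin g ⊕ Fin g) (Fin g ⊕ Fin g) ℝ |
          Mᵀ * Matrix.J (Fin g) ℝ * M = Matrix.J (Fin g) ℝ ∧ M.mulVec x = x ∧ M.mulVec y = y}) ∧
    (∀ M ∈ {M : Matrix (Fin g ⊕ Fin g) (Fin g ⊕ Fin g) ℝ |
          Mᵀ * Matrix.J (Fin g) ℝ * M = Matrix.J (Fin g) ℝ ∧ M.mulVec x = x ∧ M.mulVec y = y},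
      ∃ N ∈ {M : Matrix (Fin g ⊕ Fin g) (Fin g ⊕ Fin g) ℝ |
          Mᵀ * Matrix.J (Fin g) ℝ * M = Matrix.J (Fin g) ℝ ∧ M.mulVec x = x ∧ M.mulVec y = y},
        M * N = 1 ∧ N * M = 1) ∧
    IsClosed {M : Matrix (Fin g ⊕ Fin g) (Fin g ⊕ Fin g) ℝ |
          Mᵀ * Matrix.J (Fin g) ℝ * M = Matrix.J (Fin g) ℝ ∧ M.mulVec x = x ∧ M.mulVec y = y} ∧
    ¬ IsCompact {M : Matrix (Fin g ⊕ Fin g) (Fin g ⊕ Fin g) ℝ |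
          Mᵀ * Matrix.J (Fin g) ℝ * M = Matrix.J (Fin g) ℝ ∧ M.mulVec x = x ∧ M.mulVec y = y} := by
  rw [← coe_symplecticFixator_pair]
  exact ⟨one_mem _, fun _ hM _ hN => mul_mem hM hN,
    stabilizer_of_pair_closed_noncompact_general <|
      span_pair_ne_top_of_two_le_card (by rwa [Fintype.card_fin]) x y⟩
end
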